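/- arXiv:1505.00283 — 2 statements merged into one kernel-verified Lean document; each statement's English description precedes it below -/
import Mathlib

section
/- Let S be an abelian subgroup of the Pauli group G_d^n with no nontrivial scalars and with Nat.card S = d^n, and let M = R(S) be its image under R. Then M equals its symplectic orthogonal: for every x ∈ (Fin n → ZMod d) × (Fin n → ZMod d), x ∈ M if and only if ω(x, y) = 0 for all y ∈ M. -/
open Matrix

noncomputable def q (d : ℕ) : ℂ := Complex.exp (2 * Real.pi * Complex.I / d)

/-- Dot product of two vectors over `ZMod d`. -/
def dotp {n d : ℕ} (A B : Fin n → ZMod d) : ZMod d := ∑ i, A i * B i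

/-- The Pauli word `W(U,V)` with entries `q^{⟨U,J⟩}` at `(J, K)` when `J = K + V`. -/
noncomputable def PauliWord (d n : ℕ) (U V : Fin n → ZMod d) :
    Matrix (Fin n → ZMod d) (Fin n → ZMod d) ℂ :=
  Matrix.of fun J K => if J = K + V then q d ^ (dotp U J).val else 0

/-- The n-qudit Pauli group, as a set of matrices. -/
noncomputable def PauliSet (d n : ℕ) : Set (Matrix (Fin n → ZMod d) (Fin n → ZMod d) ℂ) :=
  {g | ∃ (k : ZMod d) (U V : Fin n → ZMod d), g = q d ^ k.val • PauliWord d n U V}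

/-- The symplectic product `ω((U1,U2),(V1,V2)) = ⟨U1,V2⟩ - ⟨U2,V1⟩`. -/
def symp {n d : ℕ} (x y : (Fin n → ZMod d) × (Fin n → ZMod d)) : ZMod d :=
  dotp x.1 y.2 - dotp x.2 y.1

theorem q_pow_val (d : ℕ) [NeZero d] (k : ZMod d) : q d ^ k.val = ZMod.stdAddChar k := by
  conv_rhs => rw [← ZMod.natCast_zmod_val k]
  have h := ZMod.stdAddChar_coe (N := d) (k.val : ℤ)
  rw [Int.cast_natCast] at h
  rw [h, q, ← Complex.exp_nat_mul]
  congr 1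
  push_cast
  ring

theorem dotp_eq {n d : ℕ} (A B : Fin n → ZMod d) : dotp A B = A ⬝ᵥ B := rfl

theorem word_mul (d n : ℕ) [NeZero d] (U V U' V' : Fin n → ZMod d) :
    PauliWord d n U V * PauliWord d n U' V' =
      (ZMod.stdAddChar (-dotp U' V) : ℂ) • PauliWord d n (U + U') (V + V') := by
  ext J K
  rw [Matrix.mul_apply, Finset.sum_eq_single (J - V)]
  · simp only [PauliWord, Matrix.of_apply, Matrix.smul_apply, q_pow_val, sub_add_cancel, if_true,
      smul_eq_mul]
    have : J - V = K + V' ↔ J = K + (V + V') := by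
      rw [sub_eq_iff_eq_add]
      constructor <;> intro h <;> rw [h] <;> abel
    simp only [this]
    split_ifs
    · rw [← AddChar.map_add_eq_mul, ← AddChar.map_add_eq_mul]
      congr 1
      simp only [dotp_eq, dotProduct_sub, add_dotProduct]
      ring
    · simp
  · intro L _ hL
    have : J ≠ L + V := fun h => hL (by rw [h]; simp)
    simp [PauliWord, this]
  · simp

theorem word_zero (d n : ℕ) [NeZero d] : PauliWord d n 0 0 = 1 := by
  ext J K
  simp [PauliWord, Matrix.one_apply, dotp]

theorem word_ne (d n : ℕ) [NeZero d] (U V : Fin n → ZMod d) : PauliWord d n U V ≠ 0 := by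
  intro h
  have := congrFun (congrFun h V) 0
  simp [PauliWord, q_pow_val] at this
  have h1 := AddChar.map_add_eq_mul (ZMod.stdAddChar (N := d)) (dotp U V) (-dotp U V)
  rw [this] at h1
  simp at h1

/-- The symplectic product as an additive homomorphism in the second variable. -/
def sympHom {n d : ℕ} (x : (Fin n → ZMod d) × (Fin n → ZMod d)) :
    (Fin n → ZMod d) × (Fin n → ZMod d) →+ ZMod d where
  toFun := symp x
  map_zero' := by simp [symp, dotp_eq]
  map_add' a b := by simp [symp, dotp_eq]; ring

theorem symp_swap {n d : ℕ} (x y : (Fin n → ZMod d) × (Fin n → ZMod d)) :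
    symp x y = - symp y x := by
  simp [symp, dotp_eq, dotProduct_comm]

theorem symp_nondeg {n d : ℕ} (x : (Fin n → ZMod d) × (Fin n → ZMod d))
    (h : ∀ y, symp x y = 0) : x = 0 := by
  ext i
  · simpa [symp, dotp_eq] using h (0, Pi.single i 1)
  · simpa [symp, dotp_eq] using h (Pi.single i 1, 0)

theorem sum_char {n d : ℕ} [NeZero d] (H : AddSubgroup ((Fin n → ZMod d) × (Fin n → ZMod d)))
    [Fintype H] (x : (Fin n → ZMod d) × (Fin n → ZMod d)) [Decidable (∀ y ∈ H, symp x y = 0)] :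
    ∑ y : H, (ZMod.stdAddChar (symp x y.1) : ℂ) =
      if ∀ y ∈ H, symp x y = 0 then (Fintype.card H : ℂ) else 0 := by
  classical
  have h := AddChar.sum_eq_ite
    ((ZMod.stdAddChar (N := d)).compAddMonoidHom ((sympHom x).comp H.subtype))
  have e : ((ZMod.stdAddChar (N := d)).compAddMonoidHom ((sympHom x).comp H.subtype)) = 0 ↔
      ∀ y ∈ H, symp x y = 0 := by
    rw [DFunLike.ext_iff]
    constructor
    · intro hh y hy
      have := hh ⟨y, hy⟩
      apply ZMod.injective_stdAddChar
      simpa [sympHom] using this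
    · intro hh y
      simp [sympHom, hh y.1 y.2]
  simp only [e] at h
  exact h

theorem card_orth {n d : ℕ} [NeZero d] (H : AddSubgroup ((Fin n → ZMod d) × (Fin n → ZMod d))) :
    Set.ncard {x | ∀ y ∈ H, symp x y = 0} * Nat.card H = d ^ n * d ^ n := by
  classical
  have h1 : ∑ x : (Fin n → ZMod d) × (Fin n → ZMod d), ∑ y : H,
      (ZMod.stdAddChar (symp x y.1) : ℂ) =
      (Set.ncard {x | ∀ y ∈ H, symp x y = 0} : ℂ) * (Nat.card H : ℂ) := by
    simp only [sum_char]
    rw [← Finset.sum_filter, Finset.sum_const, nsmul_eq_mul, Nat.card_eq_fintype_card,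
      Set.ncard_eq_toFinset_card']
    congr 3
    ext; simp
  have h2 : ∀ y : H, ∑ x : (Fin n → ZMod d) × (Fin n → ZMod d),
      (ZMod.stdAddChar (symp x y.1) : ℂ) = if y = 0 then (d ^ n * d ^ n : ℂ) else 0 := by
    intro y
    have h3 := sum_char (⊤ : AddSubgroup ((Fin n → ZMod d) × (Fin n → ZMod d))) (-y.1)
    have h4 : (∀ z ∈ (⊤ : AddSubgroup ((Fin n → ZMod d) × (Fin n → ZMod d))),
        symp (-y.1) z = 0) ↔ y = 0 := by
      constructor
      · intro h
        have := symp_nondeg _ (fun z => h z trivial)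
        exact Subtype.ext (by simpa using this)
      · rintro rfl z _
        simp [symp, dotp_eq]
    simp only [h4] at h3
    have h5 : (Fintype.card (⊤ : AddSubgroup ((Fin n → ZMod d) × (Fin n → ZMod d))) : ℂ)
        = d ^ n * d ^ n := by
      rw [← Nat.card_eq_fintype_card, AddSubgroup.card_top]
      simp
    rw [h5] at h3
    rw [← h3]
    refine (Fintype.sum_equiv AddSubgroup.topEquiv.toEquiv _ _ ?_).symm
    intro z
    congr 1
    rw [symp_swap]
    change -symp z.1 (-y.1) = symp z.1 y.1
    simp [symp, dotp_eq]
    ring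
  rw [Finset.sum_comm] at h1
  simp only [h2] at h1
  rw [Finset.sum_ite_eq' Finset.univ (0 : H)] at h1
  simp only [Finset.mem_univ, if_true] at h1
  exact_mod_cast h1.symm

theorem image_eq_symplectic_orthogonal (d n : ℕ) [NeZero d] (hd : 2 ≤ d) (hn : 1 ≤ n)
    (Rmap : Matrix (Fin n → ZMod d) (Fin n → ZMod d) ℂ →
      (Fin n → ZMod d) × (Fin n → ZMod d))
    (hR : ∀ (k : ZMod d) (U V : Fin n → ZMod d),
      Rmap (q d ^ k.val • PauliWord d n U V) = (U, V))
    (S : Set (Matrix (Fin n → ZMod d) (Fin n → ZMod d) ℂ))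
    (hSsub : S ⊆ PauliSet d n)
    (hS1 : (1 : Matrix (Fin n → ZMod d) (Fin n → ZMod d) ℂ) ∈ S)
    (hSmul : ∀ a ∈ S, ∀ b ∈ S, a * b ∈ S)
    (hSinv : ∀ a ∈ S, ∃ b ∈ S, a * b = 1)
    (hScomm : ∀ a ∈ S, ∀ b ∈ S, a * b = b * a)
    (hSscal : ∀ c : ℂ, c • (1 : Matrix (Fin n → ZMod d) (Fin n → ZMod d) ℂ) ∈ S →
      c • (1 : Matrix (Fin n → ZMod d) (Fin n → ZMod d) ℂ) = 1)
    (hcard : Nat.card S = d ^ n) :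
    ∀ x : (Fin n → ZMod d) × (Fin n → ZMod d),
      x ∈ Rmap '' S ↔ ∀ y ∈ Rmap '' S, symp x y = 0 := by
  have hpar : ∀ a ∈ S, ∃ k : ZMod d, a = (ZMod.stdAddChar k : ℂ) • PauliWord d n (Rmap a).1 (Rmap a).2 := by
    intro a ha
    obtain ⟨k, U, V, rfl⟩ := hSsub ha
    exact ⟨k, by rw [hR, q_pow_val]⟩
  have hR' : ∀ (k : ZMod d) (U V : Fin n → ZMod d),
      Rmap ((ZMod.stdAddChar k : ℂ) • PauliWord d n U V) = (U, V) := by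
    intro k U V
    rw [← q_pow_val, hR]
  have hone : Rmap 1 = 0 := by
    have := hR' 0 0 0
    rw [word_zero, AddChar.map_zero_eq_one, one_smul] at this
    exact this
  have hmul : ∀ a ∈ S, ∀ b ∈ S, Rmap (a * b) = Rmap a + Rmap b := by
    intro a ha b hb
    obtain ⟨k, hk⟩ := hpar a ha
    obtain ⟨l, hl⟩ := hpar b hb
    conv_lhs => rw [hk, hl]
    rw [smul_mul_smul_comm, word_mul, smul_smul, ← AddChar.map_add_eq_mul,
      ← AddChar.map_add_eq_mul, hR']
    rfl
  have hiso : ∀ a ∈ S, ∀ b ∈ S, symp (Rmap a) (Rmap b) = 0 := by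
    intro a ha b hb
    obtain ⟨k, hk⟩ := hpar a ha
    obtain ⟨l, hl⟩ := hpar b hb
    have h := hScomm a ha b hb
    rw [hk, hl, smul_mul_smul_comm, smul_mul_smul_comm, word_mul, word_mul, smul_smul, smul_smul,
      add_comm (Rmap b).1, add_comm (Rmap b).2, ← AddChar.map_add_eq_mul,
      ← AddChar.map_add_eq_mul, ← AddChar.map_add_eq_mul, ← AddChar.map_add_eq_mul] at h
    have h2 := ZMod.injective_stdAddChar (smul_left_injective ℂ (word_ne d n _ _) h)
    rw [add_comm l k] at h2
    have h3 := neg_injective (add_left_cancel h2)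
    rw [symp, ← h3, sub_eq_zero.2]
    rw [dotp_eq, dotp_eq, dotProduct_comm]
  have hinj : Set.InjOn Rmap S := by
    intro a ha b hb hab
    obtain ⟨k, hk⟩ := hpar a ha
    obtain ⟨l, hl⟩ := hpar b hb
    obtain ⟨c, hc, hbc⟩ := hSinv b hb
    have hab' : a = (ZMod.stdAddChar (k - l) : ℂ) • b := by
      rw [hl, smul_smul, ← AddChar.map_add_eq_mul, sub_add_cancel, ← hab]
      exact hk
    have hac : a * c = (ZMod.stdAddChar (k - l) : ℂ) • 1 := by
      rw [hab', smul_mul_assoc, hbc]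
    have h1 : a * c = 1 := by
      rw [hac]
      exact hSscal _ (hac ▸ hSmul a ha c hc)
    have hcb : c * b = 1 := mul_eq_one_comm.1 hbc
    calc a = a * (c * b) := by rw [hcb, mul_one]
      _ = b := by rw [← mul_assoc, h1, one_mul]
  let H : AddSubgroup ((Fin n → ZMod d) × (Fin n → ZMod d)) :=
    { carrier := Rmap '' S
      zero_mem' := ⟨1, hS1, hone⟩
      add_mem' := by
        rintro _ _ ⟨a, ha, rfl⟩ ⟨b, hb, rfl⟩
        exact ⟨a * b, hSmul a ha b hb, hmul a ha b hb⟩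
      neg_mem' := by
        rintro _ ⟨a, ha, rfl⟩
        obtain ⟨b, hb, hab⟩ := hSinv a ha
        refine ⟨b, hb, ?_⟩
        have := hmul a ha b hb
        rw [hab, hone] at this
        exact (neg_eq_of_add_eq_zero_right this.symm).symm }
  have hHn : (Rmap '' S).ncard = d ^ n := by
    rw [hinj.ncard_image, ← hcard, Nat.card_coe_set_eq]
  have hH : Nat.card H = d ^ n := hHn
  have hpos : 0 < d ^ n := pow_pos (by omega) n
  have hc := card_orth H
  rw [hH] at hc
  have hc' := Nat.eq_of_mul_eq_mul_right hpos hc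
  have hfin : Rmap '' S = {x | ∀ y ∈ H, symp x y = 0} := by
    apply Set.eq_of_subset_of_ncard_le
    · rintro _ ⟨a, ha, rfl⟩ _ ⟨b, hb, rfl⟩
      exact hiso a ha b hb
    · rw [hc', hHn]
    · exact Set.toFinite _
  intro x
  exact Set.ext_iff.1 hfin x
end

section
/- Let S be an abelian subgroup of the Pauli group G_d^n with no nontrivial scalars and Nat.card S = d^n, let ψ be a nonzero vector in Fix(S), and let w_1, …, w_K ∈ G_d^n with w_1 = 1 be such that the vectors w_i.mulVec ψ are linearly independent over ℂ; let Q be their ℂ-span. If the set {w_1, …, w_K} is a subgroup of G_d^n (i.e. is closed under multiplication and inverses), then Q is a stabilizer code: there exists an abelian subgroup H of G_d^n with no nontrivial scalars whose fixed subspace Fix(H) equals Q. -/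
open Matrix

/-- The subspace of states fixed by every matrix in `S`. -/
noncomputable def FixSubspace (d n : ℕ) [NeZero d]
    (S : Set (Matrix (Fin n → ZMod d) (Fin n → ZMod d) ℂ)) :
    Submodule ℂ ((Fin n → ZMod d) → ℂ) where
  carrier := {ψ | ∀ s ∈ S, s.mulVec ψ = ψ}
  add_mem' := by
    intro a b ha hb s hs
    simp [Matrix.mulVec_add, ha s hs, hb s hs]
  zero_mem' := by
    intro s hs
    simp [Matrix.mulVec_zero]
  smul_mem' := by
    intro c a ha s hs
    simp [Matrix.mulVec_smul, ha s hs]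


lemma q_prim (d : ℕ) [NeZero d] : IsPrimitiveRoot (q d) d :=
  Complex.isPrimitiveRoot_exp d (NeZero.ne d)

lemma q_add (d : ℕ) [NeZero d] (x y : ZMod d) :
    q d ^ (x + y).val = q d ^ x.val * q d ^ y.val := by
  rw [ZMod.val_add, ← pow_add]
  conv_rhs => rw [← Nat.mod_add_div (x.val + y.val) d, pow_add, pow_mul,
    (q_prim d).pow_eq_one, one_pow, mul_one]

lemma q_ne_zero (d : ℕ) (m : ℕ) : q d ^ m ≠ 0 := pow_ne_zero _ (Complex.exp_ne_zero _)

lemma pauli_mul (d n : ℕ) [NeZero d] (U V U' V' : Fin n → ZMod d) :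
    PauliWord d n U V * PauliWord d n U' V' =
      q d ^ (-dotp U' V).val • PauliWord d n (U + U') (V + V') := by
  ext J L
  simp only [Matrix.mul_apply, PauliWord, Matrix.of_apply, Matrix.smul_apply, smul_eq_mul]
  rw [Finset.sum_eq_single (L + V')]
  · by_cases h : J = L + V' + V
    · rw [if_pos h, if_pos rfl, if_pos (by rw [h]; abel), ← q_add, ← q_add]
      congr 2
      subst h
      simp only [dotp, Pi.add_apply, ← Finset.sum_neg_distrib, ← Finset.sum_add_distrib]
      refine Finset.sum_congr rfl fun i _ => ?_
      ring
    · have h2 : ¬ J = L + (V + V') := fun h' => h (by rw [h']; abel)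
      rw [if_neg h, if_neg h2]; simp
  · intro M _ hM
    rw [if_neg hM, mul_zero]
  · simp

lemma pauli_comm (d n : ℕ) [NeZero d] {a b : Matrix (Fin n → ZMod d) (Fin n → ZMod d) ℂ}
    (ha : a ∈ PauliSet d n) (hb : b ∈ PauliSet d n) : ∃ c : ℂ, a * b = c • (b * a) := by
  obtain ⟨k, U, V, rfl⟩ := ha
  obtain ⟨l, U', V', rfl⟩ := hb
  refine ⟨q d ^ (-dotp U' V).val * (q d ^ (-dotp U V').val)⁻¹, ?_⟩
  simp only [Matrix.smul_mul, Matrix.mul_smul, pauli_mul, smul_smul, add_comm U' U, add_comm V' V]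
  congr 1
  have := q_ne_zero d (-dotp U V').val
  field_simp

lemma pauli_trace (d n : ℕ) [NeZero d] {a : Matrix (Fin n → ZMod d) (Fin n → ZMod d) ℂ}
    (ha : a ∈ PauliSet d n) :
    (∃ c : ℂ, a = c • (1 : Matrix (Fin n → ZMod d) (Fin n → ZMod d) ℂ)) ∨ a.trace = 0 := by
  obtain ⟨k, U, V, rfl⟩ := ha
  by_cases hV : V = 0
  · subst hV
    by_cases hU : U = 0
    · subst hU
      left
      refine ⟨q d ^ k.val, ?_⟩
      congr 1
      ext J L
      simp [PauliWord, dotp, Matrix.one_apply]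
    · right
      obtain ⟨i, hi⟩ := Function.ne_iff.1 hU
      rw [Matrix.trace_smul]
      have h1 : (PauliWord d n U 0).trace = ∑ J, q d ^ (dotp U J).val := by
        simp [Matrix.trace, PauliWord]
      have h2 : ∑ J, q d ^ (dotp U J).val
          = (∑ J, q d ^ (dotp U J).val) * q d ^ (U i).val := by
        conv_lhs => rw [← Equiv.sum_comp (Equiv.addRight (Pi.single i (1 : ZMod d)))]
        rw [Finset.sum_mul]
        refine Finset.sum_congr rfl fun J _ => ?_
        rw [← q_add]
        congr 2
        simp [dotp, mul_add, Finset.sum_add_distrib, Pi.single_apply]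
      have h3 : q d ^ (U i).val ≠ 1 :=
        (q_prim d).pow_ne_one_of_pos_of_lt (by simpa [ZMod.val_eq_zero] using hi)
          (ZMod.val_lt _)
      have h4 : ∑ J, q d ^ (dotp U J).val = 0 := by
        by_contra h
        exact h3 (mul_left_cancel₀ h (by rw [← h2, mul_one]))
      rw [h1, h4, smul_zero]
  · right
    rw [Matrix.trace_smul]
    have : (PauliWord d n U V).trace = 0 := by
      simp [Matrix.trace, PauliWord, hV]
    rw [this, smul_zero]

theorem cws_group_codewords_is_stabilizer (d n K : ℕ) [NeZero d] (hd : 2 ≤ d) (hn : 1 ≤ n)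
    (S : Set (Matrix (Fin n → ZMod d) (Fin n → ZMod d) ℂ))
    (hSsub : S ⊆ PauliSet d n)
    (hS1 : (1 : Matrix (Fin n → ZMod d) (Fin n → ZMod d) ℂ) ∈ S)
    (hSmul : ∀ a ∈ S, ∀ b ∈ S, a * b ∈ S)
    (hSinv : ∀ a ∈ S, ∃ b ∈ S, a * b = 1)
    (hScomm : ∀ a ∈ S, ∀ b ∈ S, a * b = b * a)
    (hSscal : ∀ c : ℂ, c • (1 : Matrix (Fin n → ZMod d) (Fin n → ZMod d) ℂ) ∈ S →
      c • (1 : Matrix (Fin n → ZMod d) (Fin n → ZMod d) ℂ) = 1)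
    (hcard : Nat.card S = d ^ n)
    (ψ : (Fin n → ZMod d) → ℂ) (hψS : ψ ∈ FixSubspace d n S) (hψ : ψ ≠ 0)
    (hK : 0 < K)
    (w : Fin K → Matrix (Fin n → ZMod d) (Fin n → ZMod d) ℂ)
    (hw : ∀ i, w i ∈ PauliSet d n)
    (hw1 : w ⟨0, hK⟩ = 1)
    (hli : LinearIndependent ℂ (fun i => (w i).mulVec ψ))
    (hWmul : ∀ i j, ∃ l, w i * w j = w l)
    (hWinv : ∀ i, ∃ l, w i * w l = 1) :
    ∃ H : Set (Matrix (Fin n → ZMod d) (Fin n → ZMod d) ℂ),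
      H ⊆ PauliSet d n ∧
      (1 : Matrix (Fin n → ZMod d) (Fin n → ZMod d) ℂ) ∈ H ∧
      (∀ a ∈ H, ∀ b ∈ H, a * b ∈ H) ∧
      (∀ a ∈ H, ∃ b ∈ H, a * b = 1) ∧
      (∀ a ∈ H, ∀ b ∈ H, a * b = b * a) ∧
      (∀ c : ℂ, c • (1 : Matrix (Fin n → ZMod d) (Fin n → ZMod d) ℂ) ∈ H →
        c • (1 : Matrix (Fin n → ZMod d) (Fin n → ZMod d) ℂ) = 1) ∧
      FixSubspace d n H = Submodule.span ℂ (Set.range fun i => (w i).mulVec ψ) := by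
  classical
  have hfin : S.Finite := by
    apply Set.finite_coe_iff.1
    apply Nat.finite_of_card_ne_zero
    rw [hcard]; exact pow_ne_zero _ (NeZero.ne d)
  set T := hfin.toFinset with hT
  have hmT : ∀ s, s ∈ T ↔ s ∈ S := fun s => by simp [hT]
  have hTcard : (T.card : ℂ) = (d : ℂ) ^ n := by
    have : T.card = d ^ n := by
      rw [← hcard, Nat.card_coe_set_eq, Set.ncard_eq_toFinset_card S hfin]
    rw [this]; push_cast; rfl
  have hd0 : ((d : ℂ) ^ n) ≠ 0 := pow_ne_zero _ (Nat.cast_ne_zero.2 (NeZero.ne d))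
  set A := ∑ s ∈ T, s with hA
  have hsA : ∀ s ∈ S, s * A = A := by
    intro s hs
    obtain ⟨b, hb, hsb⟩ := hSinv s hs
    have hbs : b * s = 1 := mul_eq_one_comm.1 hsb
    rw [hA, Finset.mul_sum]
    refine Finset.sum_bij' (fun t _ => s * t) (fun t _ => b * t) ?_ ?_ ?_ ?_ ?_
    · intro t ht; exact (hmT _).2 (hSmul _ hs _ ((hmT _).1 ht))
    · intro t ht; exact (hmT _).2 (hSmul _ hb _ ((hmT _).1 ht))
    · intro t _; simp only [← mul_assoc, hbs, one_mul]
    · intro t _; simp only [← mul_assoc, hsb, one_mul]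
    · intro t _; rfl
  have hAA : A * A = ((d : ℂ) ^ n) • A := by
    conv_lhs => rw [hA, Finset.sum_mul]
    rw [← hA, Finset.sum_congr rfl (fun s hs => hsA s ((hmT s).1 hs)), Finset.sum_const,
      ← hTcard, Nat.cast_smul_eq_nsmul]
  have htr : A.trace = (d : ℂ) ^ n := by
    rw [hA, Matrix.trace_sum, Finset.sum_eq_single (1 : Matrix _ _ ℂ)]
    · simp [Matrix.trace_one, ZMod.card]
    · intro s hs hs1
      have hs := (hmT s).1 hs
      rcases pauli_trace d n (hSsub hs) with ⟨c, rfl⟩ | h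
      · exact absurd (hSscal c hs) hs1
      · exact h
    · intro h; exact absurd ((hmT _).2 hS1) h
  set P : Matrix (Fin n → ZMod d) (Fin n → ZMod d) ℂ := ((d : ℂ) ^ n)⁻¹ • A with hP
  have hPP : IsIdempotentElem (Matrix.toLin' P) := by
    change Matrix.toLin' P * Matrix.toLin' P = Matrix.toLin' P
    rw [Module.End.mul_eq_comp, ← Matrix.toLin'_mul]
    congr 1
    rw [hP, Matrix.smul_mul, Matrix.mul_smul, hAA, smul_smul ((d : ℂ) ^ n)⁻¹ ((d : ℂ) ^ n),
      inv_mul_cancel₀ hd0, one_smul]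
  have hPtr : LinearMap.trace ℂ _ (Matrix.toLin' P) = 1 := by
    rw [Matrix.trace_toLin'_eq, hP, Matrix.trace_smul, htr, smul_eq_mul, inv_mul_cancel₀ hd0]
  have hrank : Module.finrank ℂ (LinearMap.range (Matrix.toLin' P)) = 1 := by
    have h := (LinearMap.IsIdempotentElem.isProj_range _ hPP).trace
    rw [hPtr] at h
    exact_mod_cast h.symm
  have hAψ : A.mulVec ψ = ((d : ℂ) ^ n) • ψ := by
    rw [hA, Matrix.sum_mulVec, Finset.sum_congr rfl (fun s hs => hψS s ((hmT s).1 hs)),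
      Finset.sum_const, ← hTcard, Nat.cast_smul_eq_nsmul]
  have hPψ : P.mulVec ψ = ψ := by
    rw [hP, Matrix.smul_mulVec, hAψ, smul_smul, inv_mul_cancel₀ hd0, one_smul]
  have hAφ : ∀ φ, ∃ c : ℂ, A.mulVec φ = c • ψ := by
    intro φ
    have h := (finrank_eq_one_iff_of_nonzero'
      (⟨ψ, ⟨ψ, by simpa using hPψ⟩⟩ : LinearMap.range (Matrix.toLin' P))
      (fun h => hψ (congrArg Subtype.val h))).1 hrank ⟨P.mulVec φ, ⟨φ, by simp⟩⟩
    obtain ⟨c, hc⟩ := h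
    have hc := congrArg Subtype.val hc
    simp only [Submodule.coe_smul] at hc
    refine ⟨(d : ℂ) ^ n * c, ?_⟩
    rw [← smul_smul, hc, hP, Matrix.smul_mulVec, smul_smul, mul_inv_cancel₀ hd0, one_smul]
  have hwinv : ∀ i, w i * (w i)⁻¹ = 1 := by
    intro i
    obtain ⟨l, hl⟩ := hWinv i
    rw [Matrix.inv_eq_right_inv hl, hl]
  have hwinj : ∀ i j, w i = w j → i = j := by
    intro i j h
    apply hli.injective
    simp only [h]
  have hwinv' : ∀ i, (w i)⁻¹ * w i = 1 := fun i => mul_eq_one_comm.1 (hwinv i)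
  let B : Matrix (Fin n → ZMod d) (Fin n → ZMod d) ℂ → Matrix (Fin n → ZMod d) (Fin n → ZMod d) ℂ :=
    fun s => ∑ i, w i * s * (w i)⁻¹
  let H : Set (Matrix (Fin n → ZMod d) (Fin n → ZMod d) ℂ) := {s | s ∈ S ∧ ∀ i, s * w i = w i * s}
  have hB1 : ∀ s ∈ H, B s = (K : ℂ) • s := by
    intro s hs
    have : ∀ i, w i * s * (w i)⁻¹ = s := fun i => by
      rw [← hs.2 i, mul_assoc, hwinv, mul_one]
    simp only [B, this, Finset.sum_const, Finset.card_univ, Fintype.card_fin,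
      Nat.cast_smul_eq_nsmul]
  have hBconj : ∀ j s, w j * B s * (w j)⁻¹ = B s := by
    intro j s
    choose l hl using hWmul j
    have hlb : Function.Bijective l := by
      apply Finite.injective_iff_bijective.1
      intro a b hab
      apply hwinj
      have : w j * w a = w j * w b := by rw [hl, hl, hab]
      calc w a = (w j)⁻¹ * (w j * w a) := by rw [← mul_assoc, hwinv', one_mul]
        _ = w b := by rw [this, ← mul_assoc, hwinv', one_mul]
    simp only [B]
    rw [Finset.mul_sum, Finset.sum_mul, ← hlb.sum_comp (fun i => w i * s * (w i)⁻¹)]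
    refine Finset.sum_congr rfl fun i _ => ?_
    rw [← hl i, Matrix.mul_inv_rev]
    simp only [mul_assoc]
  have hB0 : ∀ s ∈ S, s ∉ H → B s = 0 := by
    intro s hs hsH
    have hne : ∃ j, s * w j ≠ w j * s := by
      by_contra! h
      exact hsH ⟨hs, h⟩
    obtain ⟨j, hj⟩ := hne
    choose c hc using fun i => pauli_comm d n (hw i) (hSsub hs)
    have hc' : ∀ i, w i * s * (w i)⁻¹ = c i • s := fun i => by
      rw [hc, Matrix.smul_mul, mul_assoc, hwinv, mul_one]
    have hBs : B s = (∑ i, c i) • s := by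
      simp only [B, hc', Finset.sum_smul]
    have hcj : c j ≠ 1 := by
      intro h
      apply hj
      rw [hc j, h, one_smul]
    have hs0 : s ≠ 0 := by
      rintro rfl
      apply hj; simp
    have h1 := hBconj j s
    rw [hBs, Matrix.mul_smul, Matrix.smul_mul, hc' j] at h1
    have h2 : (∑ i, c i) * (c j - 1) = 0 := by
      have : ((∑ i, c i) * (c j - 1)) • s = 0 := by
        rw [mul_sub, sub_smul, mul_smul, h1, mul_one, sub_self]
      exact (smul_eq_zero.1 this).resolve_right hs0
    rw [hBs, (mul_eq_zero.1 h2).resolve_right (sub_ne_zero.2 hcj), zero_smul]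
  have hH1 : (1 : Matrix (Fin n → ZMod d) (Fin n → ZMod d) ℂ) ∈ H := ⟨hS1, by simp⟩
  refine ⟨H, fun s hs => hSsub hs.1, hH1, ?_, ?_,
    fun a ha b hb => hScomm a ha.1 b hb.1, fun c hc => hSscal c hc.1, ?_⟩
  · intro a ha b hb
    refine ⟨hSmul a ha.1 b hb.1, fun i => ?_⟩
    rw [mul_assoc, hb.2, ← mul_assoc, ha.2, mul_assoc]
  · intro a ha
    obtain ⟨b, hb, hab⟩ := hSinv a ha.1
    have hba : b * a = 1 := mul_eq_one_comm.1 hab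
    refine ⟨b, ⟨hb, fun i => ?_⟩, hab⟩
    calc b * w i = b * (w i * a) * b := by rw [mul_assoc, mul_assoc, hab, mul_one]
      _ = w i * b := by rw [← ha.2, ← mul_assoc, hba, one_mul]
  · apply le_antisymm
    · intro φ hφ
      have hsum : (∑ s ∈ T, B s).mulVec φ = ((K : ℂ) * ((T.filter (· ∈ H)).card : ℂ)) • φ := by
        rw [Matrix.sum_mulVec, ← Finset.sum_filter_add_sum_filter_not T (· ∈ H)]
        have e1 : ∑ s ∈ T.filter (· ∈ H), (B s).mulVec φ
            = ∑ s ∈ T.filter (· ∈ H), (K : ℂ) • φ := by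
          refine Finset.sum_congr rfl fun s hs => ?_
          have hs := (Finset.mem_filter.1 hs).2
          rw [hB1 s hs, Matrix.smul_mulVec, hφ s hs]
        have e2 : ∑ s ∈ T.filter (¬ · ∈ H), (B s).mulVec φ = 0 := by
          refine Finset.sum_eq_zero fun s hs => ?_
          have hs := Finset.mem_filter.1 hs
          rw [hB0 s ((hmT s).1 hs.1) hs.2, Matrix.zero_mulVec]
        rw [e1, e2, add_zero, Finset.sum_const, ← Nat.cast_smul_eq_nsmul ℂ, smul_smul, mul_comm]
      have hsum2 : ∑ s ∈ T, B s = ∑ i, w i * A * (w i)⁻¹ := by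
        simp only [B]
        rw [Finset.sum_comm]
        refine Finset.sum_congr rfl fun i _ => ?_
        rw [hA, Finset.mul_sum, Finset.sum_mul]
      have hmem : (∑ s ∈ T, B s).mulVec φ ∈
          Submodule.span ℂ (Set.range fun i => (w i).mulVec ψ) := by
        rw [hsum2, Matrix.sum_mulVec]
        refine Submodule.sum_mem _ fun i _ => ?_
        obtain ⟨c, hc⟩ := hAφ ((w i)⁻¹.mulVec φ)
        rw [mul_assoc, ← Matrix.mulVec_mulVec, ← Matrix.mulVec_mulVec, hc, Matrix.mulVec_smul]
        exact Submodule.smul_mem _ _ (Submodule.subset_span ⟨i, rfl⟩)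
      rw [hsum] at hmem
      refine (Submodule.smul_mem_iff _ ?_).1 hmem
      apply mul_ne_zero
      · exact_mod_cast hK.ne'
      · have : 0 < (T.filter (· ∈ H)).card :=
          Finset.card_pos.2 ⟨1, Finset.mem_filter.2 ⟨(hmT _).2 hS1, hH1⟩⟩
        exact_mod_cast this.ne'
    · rw [Submodule.span_le]
      rintro _ ⟨i, rfl⟩ s hs
      rw [Matrix.mulVec_mulVec, hs.2 i, ← Matrix.mulVec_mulVec, hψS s hs.1]
end
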